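/- Let ℓ ∈ ℕ and σ ∈ (1/2, 1) be fixed. Then ∫_0^T |ζ^{(ℓ)}(σ + it)|² dt ∼ ζ^{(2ℓ)}(2σ) · T as T → ∞. -/

import Mathlib

open Filter

/-!
For `0 < σ < 1`, on the line `re s = σ`, the Mellin transform at `-s` of the function
`u ↦ #{n : N < n ≤ u} - u` is `(ζ(s) - ∑ n ≤ N, n⁻ˢ) / s`. Replacing the function by its increment
under the dilation `u ↦ exp h * u` compensates the factor `1 / s` for `|im s|` up to about `1 / h`,
so Plancherel's theorem turns the second moment of `ζ(s) - ∑ n ≤ N, n⁻ˢ` up to height `T`, about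
`1 / h`, into an elementary count of integers in short intervals. For `1 / 2 < σ` the result is at
most `ε T` once `N`, and then `T`, is large, uniformly for `σ` in compact subsets of `(1 / 2, 1)`.
Cauchy's formula on a small circle carries this estimate over to all derivatives. The second moment
of the `ℓ`-th derivative of `∑ n ≤ N, n⁻ˢ` is asymptotic to its diagonal part
`T ∑ n ≤ N, (log n) ^ (2 * ℓ) * n ^ (-2 * σ)`, and the sum tends to `ζ^(2ℓ)(2σ)` as `N` grows.
-/

section Plancherel

open MeasureTheory FourierTransform SchwartzMap

variable {V E : Type*} [NormedAddCommGroup V] [InnerProductSpace ℝ V] [FiniteDimensional ℝ V]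
  [MeasurableSpace V] [BorelSpace V] [NormedAddCommGroup E] [InnerProductSpace ℂ E]
  [CompleteSpace E] {f : V → E}

theorem fourier_ae_eq_Lp_fourier_toLp (hf : Integrable f) (hf₂ : MemLp f 2) :
    𝓕 f =ᵐ[volume] (𝓕 (hf₂.toLp f) : Lp E 2 (volume : Measure V)) := by
  have hcont : Continuous (𝓕 f) :=
    VectorFourier.fourierIntegral_continuous Real.continuous_fourierChar
      (by exact continuous_inner) hf
  refine ae_eq_of_integral_contDiff_smul_eq hcont.locallyIntegrable
    ((Lp.memLp _).locallyIntegrable (by norm_num)) fun φ hφ hsupp ↦ ?_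
  let Φ : 𝓢(V, ℂ) := (hsupp.comp_left (g := Complex.ofReal) Complex.ofReal_zero).toSchwartzMap
    (Complex.ofRealCLM.contDiff.comp hφ)
  have hΦ (g : V → E) : ∫ x, φ x • g x = ∫ x, Φ x • g x :=
    integral_congr_ae <| .of_forall fun x ↦ (Complex.coe_smul (φ x) (g x)).symm
  calc ∫ x, φ x • 𝓕 f x
    _ = ∫ x, 𝓕 Φ x • f x := by
      rw [hΦ]
      have := VectorFourier.integral_fourierIntegral_smul_eq_flip (μ := volume) (ν := volume)
        (L := innerₗ V) Real.continuous_fourierChar (by exact continuous_inner)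
        Φ.integrable hf
      rw [flip_innerₗ] at this
      exact this.symm
    _ = ∫ x, 𝓕 Φ x • hf₂.toLp f x :=
      integral_congr_ae <| hf₂.coeFn_toLp.mono fun x hx ↦ by simp only [hx]
    _ = ∫ x, φ x • (𝓕 (hf₂.toLp f) : Lp E 2 (volume : Measure V)) x := by
      have h := DFunLike.congr_fun (Lp.fourier_toTemperedDistribution_eq (hf₂.toLp f)) Φ
      rw [TemperedDistribution.fourier_apply, Lp.toTemperedDistribution_apply,
        Lp.toTemperedDistribution_apply] at h
      rw [hΦ]
      exact h

theorem memLp_two_fourier (hf : Integrable f) (hf₂ : MemLp f 2) : MemLp (𝓕 f) 2 :=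
  (memLp_congr_ae (fourier_ae_eq_Lp_fourier_toLp hf hf₂)).2 (Lp.memLp _)

theorem integral_norm_sq_fourier (hf : Integrable f) (hf₂ : MemLp f 2) :
    ∫ x, ‖𝓕 f x‖ ^ 2 = ∫ x, ‖f x‖ ^ 2 := by
  have hnorm (g : Lp E 2 (volume : Measure V)) : ‖g‖ ^ 2 = ∫ x, ‖g x‖ ^ 2 := by
    have h := (inner_self_eq_norm_sq_to_K (𝕜 := ℂ) g).symm.trans (L2.inner_def g g)
    simp only [inner_self_eq_norm_sq_to_K, Complex.coe_algebraMap, ← Complex.ofReal_pow,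
      integral_complex_ofReal] at h
    exact_mod_cast h
  calc ∫ x, ‖𝓕 f x‖ ^ 2
    _ = ‖𝓕 (hf₂.toLp f)‖ ^ 2 := by
      rw [hnorm]
      exact integral_congr_ae <| (fourier_ae_eq_Lp_fourier_toLp hf hf₂).fun_comp (‖·‖ ^ 2)
    _ = ‖hf₂.toLp f‖ ^ 2 := by rw [Lp.norm_fourier_eq]
    _ = ∫ x, ‖f x‖ ^ 2 := by
      rw [hnorm]
      exact integral_congr_ae <| hf₂.coeFn_toLp.fun_comp (‖·‖ ^ 2)

end Plancherel

section MellinPlancherel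

open MeasureTheory Set FourierTransform

theorem integrableOn_Ioi_iff_integrable_exp_neg_smul {E : Type*} [NormedAddCommGroup E]
    [NormedSpace ℝ E] {f : ℝ → E} :
    IntegrableOn f (Ioi 0) ↔ Integrable fun v ↦ Real.exp (-v) • f (Real.exp (-v)) := by
  rw [← Real.range_exp, ← image_univ, integrableOn_image_iff_integrableOn_abs_deriv_smul
    MeasurableSet.univ (fun x _ ↦ (Real.hasDerivAt_exp x).hasDerivWithinAt)
    Real.exp_injective.injOn, integrableOn_univ]
  simp only [Real.abs_exp]
  exact ((Measure.measurePreserving_neg volume).integrable_comp_emb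
    (MeasurableEquiv.neg ℝ).measurableEmbedding).symm

theorem integral_Ioi_eq_integral_exp_neg_smul {E : Type*} [NormedAddCommGroup E]
    [NormedSpace ℝ E] (f : ℝ → E) :
    ∫ u in Ioi 0, f u = ∫ v, Real.exp (-v) • f (Real.exp (-v)) := by
  rw [← Real.range_exp, ← image_univ, integral_image_eq_integral_abs_deriv_smul
    MeasurableSet.univ (fun x _ ↦ (Real.hasDerivAt_exp x).hasDerivWithinAt)
    Real.exp_injective.injOn, setIntegral_univ, ← integral_neg_eq_self]
  simp only [Real.abs_exp]

variable {E : Type*} [NormedAddCommGroup E]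

section NormedSpace

variable [NormedSpace ℂ E] {f : ℝ → E} {σ : ℝ}

theorem integrable_exp_mul_smul_of_mellinConvergent (hf : MellinConvergent f σ) :
    Integrable fun v ↦ Real.exp (-σ * v) • f (Real.exp (-v)) := by
  refine (integrableOn_Ioi_iff_integrable_exp_neg_smul.1 hf).congr <| .of_forall fun v ↦ ?_
  have hcpow : ((Real.exp (-v) : ℝ) : ℂ) ^ ((σ : ℂ) - 1) = (Real.exp (-v * (σ - 1)) : ℝ) := by
    rw [Real.exp_mul, Complex.ofReal_cpow (Real.exp_pos _).le]
    push_cast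
    rfl
  simp only [hcpow, Complex.coe_smul, smul_smul, ← Real.exp_add]
  ring_nf

theorem mellin_vertical_eq_fourier (f : ℝ → E) (σ t : ℝ) :
    mellin f (σ + t * Complex.I) =
      𝓕 (fun v ↦ Real.exp (-σ * v) • f (Real.exp (-v))) (t / (2 * Real.pi)) := by
  simp [mellin_eq_fourier]

theorem norm_sq_exp_mul_smul (f : ℝ → E) (σ v : ℝ) :
    ‖Real.exp (-σ * v) • f (Real.exp (-v))‖ ^ 2 =
      Real.exp (-v) • (Real.exp (-v) ^ (2 * σ - 1) * ‖f (Real.exp (-v))‖ ^ 2) := by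
  rw [norm_smul, Real.norm_of_nonneg (Real.exp_pos _).le, mul_pow, ← Real.exp_mul,
    ← Real.exp_nat_mul, smul_eq_mul, ← mul_assoc (Real.exp (-v)), ← Real.exp_add]
  push_cast
  ring_nf

theorem memLp_two_exp_mul_smul (hf : MellinConvergent f σ)
    (hf₂ : IntegrableOn (fun u ↦ u ^ (2 * σ - 1) * ‖f u‖ ^ 2) (Ioi 0)) :
    MemLp (fun v ↦ Real.exp (-σ * v) • f (Real.exp (-v))) 2 := by
  rw [memLp_two_iff_integrable_sq_norm
    (integrable_exp_mul_smul_of_mellinConvergent hf).aestronglyMeasurable]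
  simpa only [norm_sq_exp_mul_smul] using integrableOn_Ioi_iff_integrable_exp_neg_smul.1 hf₂

end NormedSpace

variable [InnerProductSpace ℂ E] [CompleteSpace E] {f : ℝ → E} {σ : ℝ}

theorem integrable_norm_sq_mellin (hf : MellinConvergent f σ)
    (hf₂ : IntegrableOn (fun u ↦ u ^ (2 * σ - 1) * ‖f u‖ ^ 2) (Ioi 0)) :
    Integrable fun t : ℝ ↦ ‖mellin f (σ + t * Complex.I)‖ ^ 2 := by
  simp_rw [mellin_vertical_eq_fourier]
  exact ((memLp_two_fourier (integrable_exp_mul_smul_of_mellinConvergent hf)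
    (memLp_two_exp_mul_smul hf hf₂)).integrable_norm_pow two_ne_zero).comp_div (by positivity)

theorem integral_norm_sq_mellin (hf : MellinConvergent f σ)
    (hf₂ : IntegrableOn (fun u ↦ u ^ (2 * σ - 1) * ‖f u‖ ^ 2) (Ioi 0)) :
    ∫ t : ℝ, ‖mellin f (σ + t * Complex.I)‖ ^ 2 =
      2 * Real.pi * ∫ u in Ioi 0, u ^ (2 * σ - 1) * ‖f u‖ ^ 2 := by
  simp_rw [mellin_vertical_eq_fourier]
  rw [Measure.integral_comp_div (fun x ↦ ‖𝓕 (fun v ↦ Real.exp (-σ * v) • f (Real.exp (-v))) x‖ ^ 2),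
    integral_norm_sq_fourier (integrable_exp_mul_smul_of_mellinConvergent hf)
      (memLp_two_exp_mul_smul hf hf₂), integral_Ioi_eq_integral_exp_neg_smul,
    abs_of_pos Real.two_pi_pos, smul_eq_mul]
  simp only [norm_sq_exp_mul_smul]

end MellinPlancherel

section Dilation

open MeasureTheory Set

/-- The increment of `f` under the dilation of its argument by `exp h`. It replaces `f` before
Plancherel is applied because its Mellin transform carries a factor that vanishes at `s = 0`, which
removes the denominator `s` of the transforms considered here. -/
noncomputable def dilationDiff {E : Type*} [Sub E] (h : ℝ) (f : ℝ → E) (u : ℝ) : E :=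
  f (Real.exp h * u) - f u

variable {E : Type*} [NormedAddCommGroup E]

theorem hasMellin_dilationDiff [NormedSpace ℂ E] {f : ℝ → E} {s : ℂ} {m : E}
    (hf : HasMellin f s m) (h : ℝ) :
    HasMellin (dilationDiff h f) s ((Complex.exp (-(h * s)) - 1) • m) := by
  have hexp : (Real.exp h : ℂ) ^ (-s) = Complex.exp (-(h * s)) := by
    rw [Complex.cpow_def_of_ne_zero (by exact_mod_cast (Real.exp_pos h).ne'),
      ← Complex.ofReal_log (Real.exp_pos h).le, Real.log_exp, mul_neg]
  have hdil := hasMellin_sub ((MellinConvergent.comp_mul_left (Real.exp_pos h)).2 hf.1) hf.1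
  rw [mellin_comp_mul_left f s (Real.exp_pos h), hf.2, hexp] at hdil
  rwa [sub_smul, one_smul]

theorem half_norm_le_norm_exp_sub_one {z : ℂ} (hz : ‖z‖ ≤ 1 / 2) :
    ‖z‖ / 2 ≤ ‖Complex.exp z - 1‖ := by
  have hexp := Complex.norm_exp_sub_one_sub_id_le (x := z) (by linarith)
  have htri := norm_sub_norm_le z (z - (Complex.exp z - 1))
  rw [sub_sub_cancel, norm_sub_rev z] at htri
  nlinarith [norm_nonneg z]

theorem norm_sq_le_norm_sq_mellin_dilationDiff [NormedSpace ℂ E] {f : ℝ → E} {s : ℂ} {h : ℝ} {m : E}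
    (hf : HasMellin f (-s) (s⁻¹ • m)) (hs : s ≠ 0) (hh : 0 < h) (hhs : h * ‖s‖ ≤ 1 / 2) :
    ‖m‖ ^ 2 ≤ 4 / h ^ 2 * ‖mellin (dilationDiff h f) (-s)‖ ^ 2 := by
  have hnorm : ‖(h : ℂ) * s‖ = h * ‖s‖ := by rw [norm_mul, Complex.norm_of_nonneg hh.le]
  have hexp := half_norm_le_norm_exp_sub_one (hnorm.trans_le hhs)
  rw [(hasMellin_dilationDiff hf h).2, mul_neg, neg_neg, norm_smul, norm_smul, norm_inv,
    ← div_le_iff₀' (by positivity), div_div_eq_mul_div]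
  calc ‖m‖ ^ 2 * h ^ 2 / 4
    _ = (‖(h : ℂ) * s‖ / 2 * (‖s‖⁻¹ * ‖m‖)) ^ 2 := by
      rw [hnorm]
      field_simp [norm_ne_zero_iff.2 hs]
      norm_num
    _ ≤ _ := by gcongr

theorem setIntegral_norm_sq_le_integral_dilationDiff [InnerProductSpace ℂ E] [CompleteSpace E]
    {f : ℝ → E} {F : ℂ → E} {σ h T : ℝ} (hσ : σ ≠ 0) (hh : 0 < h) (hhT : h * (|σ| + T) ≤ 1 / 2)
    (hf : ∀ t : ℝ, HasMellin f (-(σ + t * Complex.I))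
      ((σ + t * Complex.I)⁻¹ • F (σ + t * Complex.I)))
    (hf₂ : IntegrableOn (fun u ↦ u ^ (-2 * σ - 1) * ‖dilationDiff h f u‖ ^ 2) (Ioi 0)) :
    ∫ t in Icc (-T) T, ‖F (σ + t * Complex.I)‖ ^ 2 ≤
      8 * Real.pi / h ^ 2 * ∫ u in Ioi 0, u ^ (-2 * σ - 1) * ‖dilationDiff h f u‖ ^ 2 := by
  rw [neg_mul_comm] at hf₂ ⊢
  have hline (t : ℝ) : -((σ : ℂ) + t * Complex.I) = (-σ : ℝ) + (-t : ℝ) * Complex.I := by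
    push_cast
    ring
  have hconv : MellinConvergent (dilationDiff h f) (-σ : ℝ) := by
    simpa using (hasMellin_dilationDiff (hf 0) h).1
  have hint := (integrable_norm_sq_mellin hconv hf₂).comp_neg.const_mul (4 / h ^ 2)
  calc ∫ t in Icc (-T) T, ‖F (σ + t * Complex.I)‖ ^ 2
    _ ≤ ∫ t in Icc (-T) T,
        4 / h ^ 2 * ‖mellin (dilationDiff h f) ((-σ : ℝ) + (-t : ℝ) * Complex.I)‖ ^ 2 := by
      refine integral_mono_of_nonneg (.of_forall fun _ ↦ by positivity) hint.integrableOn ?_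
      filter_upwards [ae_restrict_mem measurableSet_Icc] with t ht
      rw [← hline]
      refine norm_sq_le_norm_sq_mellin_dilationDiff (hf t) (fun h0 ↦ hσ ?_) hh (le_trans ?_ hhT)
      · simpa using congr_arg Complex.re h0
      · gcongr
        have hnorm : ‖(σ : ℂ) + t * Complex.I‖ ≤ |σ| + |t| := by
          simpa using Complex.norm_le_abs_re_add_abs_im (σ + t * Complex.I)
        linarith [abs_le.2 ht]
    _ ≤ ∫ t, 4 / h ^ 2 * ‖mellin (dilationDiff h f) ((-σ : ℝ) + (-t : ℝ) * Complex.I)‖ ^ 2 :=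
      setIntegral_le_integral hint (.of_forall fun _ ↦ by positivity)
    _ = _ := by
      rw [integral_const_mul, integral_neg_eq_self (fun t : ℝ ↦
          ‖mellin (dilationDiff h f) ((-σ : ℝ) + t * Complex.I)‖ ^ 2) volume,
        integral_norm_sq_mellin hconv hf₂]
      ring

end Dilation

section MellinFloor

open MeasureTheory Set Asymptotics

theorem hasMellin_indicator_Ici {s : ℂ} (hs : 0 < s.re) {c : ℝ} (hc : 0 < c) :
    HasMellin (indicator (Ici c) fun _ ↦ (1 : ℂ)) (-s) ((c : ℂ) ^ (-s) / s) := by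
  have hre : (-s - 1).re < -1 := by simpa [sub_lt_iff_lt_add] using hs
  have hind : (fun u : ℝ ↦ (u : ℂ) ^ (-s - 1) • indicator (Ici c) (fun _ ↦ (1 : ℂ)) u) =
      indicator (Ici c) fun u : ℝ ↦ (u : ℂ) ^ (-s - 1) := by
    ext u
    by_cases hu : u ∈ Ici c <;> simp [hu]
  have hsub : Ici c ⊆ Ioi 0 := fun _ hu ↦ hc.trans_le hu
  refine ⟨?_, ?_⟩
  · rw [MellinConvergent, hind]
    have hint := (integrableOn_Ioi_cpow_of_lt hre hc).congr_set_ae Ioi_ae_eq_Ici.symm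
    exact (hint.integrable_indicator measurableSet_Ici).integrableOn
  · rw [mellin, hind, setIntegral_indicator measurableSet_Ici, inter_eq_self_of_subset_right hsub,
      integral_Ici_eq_integral_Ioi, integral_Ioi_cpow_of_lt hre hc, sub_add_cancel, neg_div_neg_eq]

theorem mellinConvergent_natFloor {s : ℂ} (hs : 1 < s.re) :
    MellinConvergent (fun u : ℝ ↦ (⌊u⌋₊ : ℂ)) (-s) := by
  have hmeas : Measurable fun u : ℝ ↦ (⌊u⌋₊ : ℂ) := measurable_from_nat.comp Nat.measurable_floor
  refine mellinConvergent_of_isBigO_rpow (a := -1) (b := -s.re - 1) ?_ ?_ (by simpa using hs) ?_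
    (by simp)
  · refine (continuous_id.locallyIntegrable.mono hmeas.aestronglyMeasurable
      (.of_forall fun u ↦ ?_)).locallyIntegrableOn _
    rw [Complex.norm_natCast]
    exact (Nat.cast_le.2 (Nat.floor_mono (le_abs_self u))).trans (Nat.floor_le (abs_nonneg u))
  · refine .of_bound 1 ((eventually_ge_atTop 0).mono fun u hu ↦ ?_)
    simpa [abs_of_nonneg hu] using Nat.floor_le hu
  · refine .of_bound 0 (mem_nhdsWithin_of_mem_nhds ?_)
    filter_upwards [Iio_mem_nhds one_pos] with u hu
    simp [Nat.floor_eq_zero.2 (mem_Iio.1 hu)]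

theorem hasMellin_natFloor {s : ℂ} (hs : 1 < s.re) :
    HasMellin (fun u : ℝ ↦ (⌊u⌋₊ : ℂ)) (-s) (riemannZeta s / s) := by
  refine ⟨mellinConvergent_natFloor hs, ?_⟩
  have hs0 : s ≠ 0 := by
    rintro rfl
    norm_num at hs
  have hLSeries := LSeries_eq_mul_integral' (fun _ ↦ (1 : ℂ)) zero_le_one hs
    (by simpa using isBigO_refl _ _)
  have hIoi : mellin (fun u : ℝ ↦ (⌊u⌋₊ : ℂ)) (-s) =
      ∫ t in Ioi (1 : ℝ), (∑ _ ∈ Finset.Icc 1 ⌊t⌋₊, (1 : ℂ)) * t ^ (-(s + 1)) := by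
    rw [mellin, ← setIntegral_eq_of_subset_of_ae_sdiff_eq_zero (s := Ioi 1)
      measurableSet_Ioi.nullMeasurableSet (Ioi_subset_Ioi zero_le_one)]
    · simp_rw [neg_add']
      simp [mul_comm]
    · filter_upwards [Measure.ae_ne volume 1] with u hu hmem
      have hlt : u < 1 := lt_of_le_of_ne (not_lt.1 hmem.2) hu
      simp [Nat.floor_eq_zero.2 hlt]
  rw [eq_div_iff hs0, mul_comm, hIoi, ← hLSeries]
  exact LSeries_one_eq_riemannZeta hs

/-- The function vanishing for `u < 1` and equal to the fractional part of `u` for `1 ≤ u`. Unlike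
that of `Int.fract`, its Mellin transform at `-s` converges in the whole half-plane `0 < re s`. -/
noncomputable def fractAboveOne : ℝ → ℂ := indicator (Ici 1) fun u ↦ ((Int.fract u : ℝ) : ℂ)

theorem norm_fractAboveOne_le_one (u : ℝ) : ‖fractAboveOne u‖ ≤ 1 := by
  refine (norm_indicator_le_norm_self _ u).trans ?_
  rw [Complex.norm_of_nonneg (Int.fract_nonneg u)]
  exact (Int.fract_lt_one u).le

theorem locallyIntegrable_fractAboveOne : LocallyIntegrable fractAboveOne := by
  have hmeas : Measurable fractAboveOne :=
    Measurable.indicator (by fun_prop) measurableSet_Ici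
  exact (locallyIntegrable_const (1 : ℝ)).mono hmeas.aestronglyMeasurable
    (.of_forall fun u ↦ by simpa using norm_fractAboveOne_le_one u)

theorem fractAboveOne_isBigO_atTop : fractAboveOne =O[atTop] fun u : ℝ ↦ u ^ (-0 : ℝ) :=
  isBigO_of_le _ fun u ↦ by simpa using norm_fractAboveOne_le_one u

theorem fractAboveOne_isBigO_nhdsGT_zero (b : ℝ) :
    fractAboveOne =O[nhdsWithin 0 (Ioi 0)] fun u : ℝ ↦ u ^ (-b) := by
  refine .of_bound 0 (mem_nhdsWithin_of_mem_nhds ?_)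
  filter_upwards [Iio_mem_nhds one_pos] with u hu
  simp [fractAboveOne, not_le.2 (mem_Iio.1 hu)]

theorem mellinConvergent_fractAboveOne {s : ℂ} (hs : 0 < s.re) :
    MellinConvergent fractAboveOne (-s) :=
  mellinConvergent_of_isBigO_rpow (locallyIntegrable_fractAboveOne.locallyIntegrableOn _)
    fractAboveOne_isBigO_atTop (by simpa using hs)
    (fractAboveOne_isBigO_nhdsGT_zero (-s.re - 1)) (by simp)

theorem differentiableAt_mellin_fractAboveOne {s : ℂ} (hs : 0 < s.re) :
    DifferentiableAt ℂ (fun s ↦ mellin fractAboveOne (-s)) s :=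
  (mellin_differentiableAt_of_isBigO_rpow (locallyIntegrable_fractAboveOne.locallyIntegrableOn _)
    fractAboveOne_isBigO_atTop (by simpa using hs)
    (fractAboveOne_isBigO_nhdsGT_zero (-s.re - 1)) (by simp)).comp s
      differentiable_neg.differentiableAt

theorem hasMellin_indicator_Ici_one_id {s : ℂ} (hs : 1 < s.re) :
    HasMellin (indicator (Ici (1 : ℝ)) fun u : ℝ ↦ (u : ℂ)) (-s) (1 / (s - 1)) := by
  have h := hasMellin_indicator_Ici (s := s - 1) (by simpa using hs) one_pos
  have hind : (indicator (Ici (1 : ℝ)) fun u : ℝ ↦ (u : ℂ)) =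
      fun u : ℝ ↦ (u : ℂ) ^ (1 : ℂ) • indicator (Ici (1 : ℝ)) (fun _ ↦ (1 : ℂ)) u := by
    ext u
    by_cases hu : u ∈ Ici (1 : ℝ) <;> simp [hu]
  rw [hind, HasMellin, MellinConvergent.cpow_smul, mellin_cpow_smul, neg_add_eq_sub, ← neg_sub]
  simpa [HasMellin] using h

theorem riemannZeta_eq_of_one_lt_re {s : ℂ} (hs : 1 < s.re) :
    riemannZeta s = s / (s - 1) - s * mellin fractAboveOne (-s) := by
  have hs0 : s ≠ 0 := by
    rintro rfl
    norm_num at hs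
  have hdiff := hasMellin_sub (hasMellin_indicator_Ici_one_id hs).1
    (mellinConvergent_fractAboveOne (one_pos.trans hs))
  have hfun : (fun u : ℝ ↦ indicator (Ici 1) (fun u : ℝ ↦ (u : ℂ)) u - fractAboveOne u) =
      fun u ↦ (⌊u⌋₊ : ℂ) := by
    ext u
    by_cases hu : 1 ≤ u
    · rw [fractAboveOne, indicator_of_mem (mem_Ici.2 hu), indicator_of_mem (mem_Ici.2 hu),
        ← Complex.ofReal_sub, Int.self_sub_fract,
        ← natCast_floor_eq_intCast_floor (zero_le_one.trans hu), Complex.ofReal_natCast]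
    · simp [fractAboveOne, hu, Nat.floor_eq_zero.2 (not_le.1 hu)]
  have h := hdiff.2
  rw [hfun, (hasMellin_natFloor hs).2, (hasMellin_indicator_Ici_one_id hs).2, div_eq_iff hs0] at h
  rw [h]
  ring

theorem riemannZeta_eq_of_re_pos {s : ℂ} (hs : 0 < s.re) (hs₁ : s ≠ 1) :
    riemannZeta s = s / (s - 1) - s * mellin fractAboveOne (-s) := by
  let g : ℂ → ℂ := fun z ↦ z - z * (z - 1) * mellin fractAboveOne (-z)
  have hopen : IsOpen {z : ℂ | 0 < z.re} := isOpen_lt continuous_const Complex.continuous_re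
  have hzeta : AnalyticOnNhd ℂ riemannZeta₁ {z : ℂ | 0 < z.re} :=
    differentiable_riemannZeta₁.differentiableOn.analyticOnNhd hopen
  have hg : AnalyticOnNhd ℂ g {z : ℂ | 0 < z.re} := by
    refine DifferentiableOn.analyticOnNhd
      (fun z hz ↦ DifferentiableAt.differentiableWithinAt ?_) hopen
    have := differentiableAt_mellin_fractAboveOne hz
    fun_prop
  have hgerm : riemannZeta₁ =ᶠ[nhds 2] g := by
    filter_upwards [(isOpen_lt continuous_const Complex.continuous_re).mem_nhds
      (show (1 : ℝ) < (2 : ℂ).re by simp)] with z hz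
    have hz₁ : z ≠ 1 := by
      rintro rfl
      simp at hz
    have h := riemannZeta_eq_of_one_lt_re hz
    rw [riemannZeta_eq_inv_sub_mul hz₁, inv_mul_eq_iff_eq_mul₀ (sub_ne_zero.2 hz₁)] at h
    rw [h]
    field_simp [sub_ne_zero.2 hz₁]
    simp only [g]
    ring
  have heq := hzeta.eqOn_of_preconnected_of_eventuallyEq hg
    (convex_halfSpace_re_gt 0).isPreconnected (by simp) hgerm hs
  have hs₁' : s - 1 ≠ 0 := sub_ne_zero.2 hs₁
  rw [riemannZeta_eq_inv_sub_mul hs₁, heq]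
  simp only [g]
  field_simp

theorem hasMellin_congr_ae {E : Type*} [NormedAddCommGroup E] [NormedSpace ℂ E] {f g : ℝ → E}
    {s : ℂ} {m : E} (h : f =ᵐ[volume.restrict (Ioi 0)] g) (hf : HasMellin f s m) :
    HasMellin g s m := by
  have hcongr : (fun u : ℝ ↦ (u : ℂ) ^ (s - 1) • f u) =ᵐ[volume.restrict (Ioi 0)]
      fun u ↦ (u : ℂ) ^ (s - 1) • g u := h.mono fun u hu ↦ by simp only [hu]
  exact ⟨hf.1.congr hcongr, (integral_congr_ae hcongr).symm.trans hf.2⟩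

theorem hasMellin_fract {s : ℂ} (hs : 0 < s.re) (hs₁ : s.re < 1) :
    HasMellin (fun u : ℝ ↦ ((Int.fract u : ℝ) : ℂ)) (-s) (-(riemannZeta s / s)) := by
  have hs0 : s ≠ 0 := by
    rintro rfl
    simp at hs
  have hne : s ≠ 1 := by
    rintro rfl
    simp at hs₁
  have hadd := hasMellin_add (hasMellin_cpow_Ioc 1 (s := -s) (by simpa using hs₁)).1
    (mellinConvergent_fractAboveOne hs)
  have hvalue : mellin (indicator (Ioc 0 1) fun t : ℝ ↦ (t : ℂ) ^ (1 : ℂ)) (-s) +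
      mellin fractAboveOne (-s) = -(riemannZeta s / s) := by
    have h₁ : s - 1 ≠ 0 := sub_ne_zero.2 hne
    have h₂ : -s + 1 ≠ 0 := fun h ↦ h₁ (by linear_combination -h)
    rw [(hasMellin_cpow_Ioc 1 (by simpa using hs₁)).2, riemannZeta_eq_of_re_pos hs hne]
    field_simp
    ring
  rw [hvalue] at hadd
  refine hasMellin_congr_ae ?_ hadd
  filter_upwards [ae_restrict_of_ae (Measure.ae_ne volume 1), ae_restrict_mem measurableSet_Ioi]
    with u hu hu0
  rcases lt_or_gt_of_ne hu with h | h
  · simp [fractAboveOne, not_le.2 h, h.le, mem_Ioi.1 hu0, Int.fract_eq_self.2 ⟨hu0.le, h⟩]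
  · simp [fractAboveOne, h.le, not_le.2 h]

end MellinFloor

section TailCount

open MeasureTheory Set

/-- The partial sum `∑_{1 ≤ n ≤ N} n^{-s}` of the Dirichlet series of the zeta function. -/
noncomputable def partialZeta (N : ℕ) (s : ℂ) : ℂ := ∑ n ∈ Finset.Icc 1 N, (n : ℂ) ^ (-s)

/-- The number of integers in `(N, u]`, through truncated subtraction. -/
noncomputable def tailCount (N : ℕ) (u : ℝ) : ℝ := (⌊u⌋₊ - N : ℕ)

theorem hasMellin_min_natFloor (N : ℕ) {s : ℂ} (hs : 0 < s.re) :
    HasMellin (fun u : ℝ ↦ ((min ⌊u⌋₊ N : ℕ) : ℂ)) (-s) (partialZeta N s / s) := by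
  induction N with
  | zero => simp [HasMellin, MellinConvergent, mellin, partialZeta]
  | succ N ih =>
    have hstep : (fun u : ℝ ↦ ((min ⌊u⌋₊ (N + 1) : ℕ) : ℂ)) = fun u : ℝ ↦
        ((min ⌊u⌋₊ N : ℕ) : ℂ) + indicator (Ici ((N + 1 : ℕ) : ℝ)) (fun _ ↦ (1 : ℂ)) u := by
      ext u
      by_cases hu : N + 1 ≤ ⌊u⌋₊
      · have hmem : u ∈ Ici ((N + 1 : ℕ) : ℝ) := (Nat.le_floor_iff' N.succ_ne_zero).1 hu
        rw [indicator_of_mem hmem, min_eq_right hu, min_eq_right (by lia)]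
        push_cast
        rfl
      · have hmem : u ∉ Ici ((N + 1 : ℕ) : ℝ) := fun h ↦
          hu ((Nat.le_floor_iff' N.succ_ne_zero).2 h)
        rw [indicator_of_notMem hmem, add_zero, min_eq_left (by lia), min_eq_left (by lia)]
    have hnext := hasMellin_indicator_Ici hs (c := ((N + 1 : ℕ) : ℝ)) (by positivity)
    have hadd := hasMellin_add ih.1 hnext.1
    rw [ih.2, hnext.2, ← add_div, ← hstep] at hadd
    simpa only [partialZeta, Finset.sum_Icc_succ_top (Nat.le_add_left 1 N), Complex.ofReal_natCast]
      using hadd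

theorem tailCount_eq_sub_min (N : ℕ) (u : ℝ) : tailCount N u = ⌊u⌋₊ - (min ⌊u⌋₊ N : ℕ) := by
  rw [tailCount, ← Nat.cast_sub (min_le_left _ _), tsub_min]

theorem hasMellin_tailCount (N : ℕ) {s : ℂ} (hs : 1 < s.re) :
    HasMellin (fun u ↦ (tailCount N u : ℂ)) (-s) ((riemannZeta s - partialZeta N s) / s) := by
  have hfloor := hasMellin_natFloor hs
  have hmin := hasMellin_min_natFloor N (one_pos.trans hs)
  have hsub := hasMellin_sub hfloor.1 hmin.1
  rw [hfloor.2, hmin.2, ← sub_div] at hsub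
  simpa only [tailCount_eq_sub_min, Complex.ofReal_sub, Complex.ofReal_natCast] using hsub

theorem hasMellin_tailCount_sub_self (N : ℕ) {s : ℂ} (hs : 0 < s.re) (hs₁ : s.re < 1) :
    HasMellin (fun u ↦ ((tailCount N u - u : ℝ) : ℂ)) (-s)
      (s⁻¹ • (riemannZeta s - partialZeta N s)) := by
  have hfract := hasMellin_fract hs hs₁
  have hmin := hasMellin_min_natFloor N hs
  have hsum := hasMellin_add hfract.1 hmin.1
  have hneg := hasMellin_const_smul hsum.1 (-1 : ℂ)
  have hvalue : (-1 : ℂ) • (-(riemannZeta s / s) + partialZeta N s / s) =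
      s⁻¹ • (riemannZeta s - partialZeta N s) := by
    simp only [smul_eq_mul]
    ring
  rw [hsum.2, hfract.2, hmin.2, hvalue] at hneg
  refine hasMellin_congr_ae ?_ hneg
  filter_upwards [ae_restrict_mem measurableSet_Ioi] with u hu
  rw [tailCount_eq_sub_min, ← Int.self_sub_floor, ← natCast_floor_eq_intCast_floor (le_of_lt hu)]
  simp only [smul_eq_mul, Complex.ofReal_sub, Complex.ofReal_natCast]
  ring

theorem monotone_tailCount (N : ℕ) : Monotone (tailCount N) := fun _ _ h ↦ by
  unfold tailCount
  gcongr

theorem tailCount_sub_tailCount_le (N : ℕ) {u v : ℝ} (hu : 0 ≤ u) (huv : u ≤ v) :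
    tailCount N v - tailCount N u ≤ v - u + 1 := by
  have hfloor : (⌊u⌋₊ : ℝ) ≤ N + tailCount N u := by
    rw [tailCount]
    exact_mod_cast le_add_tsub
  have hv : tailCount N v ≤ max (⌊v⌋₊ - N : ℝ) 0 := by
    rcases le_total N ⌊v⌋₊ with h | h
    · simp [tailCount, Nat.cast_sub h]
    · simp [tailCount, h]
  have hpos : 0 ≤ tailCount N u := Nat.cast_nonneg _
  have := Nat.lt_floor_add_one u
  have := Nat.floor_le (hu.trans huv)
  rcases le_max_iff.1 hv with h | h <;> linarith

theorem dilationDiff_tailCount_nonneg (N : ℕ) {h u : ℝ} (hh : 0 ≤ h) (hu : 0 ≤ u) :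
    0 ≤ dilationDiff h (tailCount N) u :=
  sub_nonneg.2 (monotone_tailCount N (le_mul_of_one_le_left hu (Real.one_le_exp hh)))

-- The jump of the counting function over `(u, e^h u]` is an integer `c`, so `c ≤ 3` gives
-- `c² ≤ 3 c`, whose weighted integral is an explicit Dirichlet series.
theorem sq_dilationDiff_tailCount_sub_self_le_of_mul_le_one (N : ℕ) {h u : ℝ} (hh : 0 ≤ h)
    (hh₁ : h ≤ 1) (hu : 0 ≤ u) (hhu : h * u ≤ 1) :
    dilationDiff h (fun u ↦ tailCount N u - u) u ^ 2 ≤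
      3 * dilationDiff h (tailCount N) u + 4 * (h * u) ^ 2 := by
  have hexp : 0 ≤ Real.exp h - 1 := sub_nonneg.2 (Real.one_le_exp hh)
  have hexp_le : Real.exp h - 1 ≤ 2 * h := by
    simpa [abs_of_nonneg hh] using (le_abs_self _).trans
      (Real.abs_exp_sub_one_le (abs_le.2 ⟨by linarith, hh₁⟩))
  have hlin : 0 ≤ (Real.exp h - 1) * u := by positivity
  have hlin_le : (Real.exp h - 1) * u ≤ 2 * (h * u) := by
    rw [← mul_assoc]
    gcongr
  have hjump := dilationDiff_tailCount_nonneg N hh hu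
  have hjump_le : dilationDiff h (tailCount N) u ≤ 3 := by
    have := tailCount_sub_tailCount_le N hu (le_mul_of_one_le_left hu (Real.one_le_exp hh))
    simp only [dilationDiff]
    linarith
  have hsub : dilationDiff h (fun u ↦ tailCount N u - u) u =
      dilationDiff h (tailCount N) u - (Real.exp h - 1) * u := by
    simp only [dilationDiff]
    ring
  rw [hsub]
  nlinarith [mul_nonneg hjump hlin, mul_nonneg hjump (sub_nonneg.2 hjump_le)]

theorem abs_dilationDiff_tailCount_sub_self_le_one {N : ℕ} {h u : ℝ} (hh : 0 ≤ h)
    (hN : (N : ℝ) ≤ u) : |dilationDiff h (fun u ↦ tailCount N u - u) u| ≤ 1 := by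
  have hfract {v : ℝ} (hv : (N : ℝ) ≤ v) : tailCount N v - v = -Int.fract v - N := by
    rw [tailCount, Nat.cast_sub (Nat.le_floor hv), ← Int.self_sub_floor,
      ← natCast_floor_eq_intCast_floor (N.cast_nonneg.trans hv)]
    ring
  have hu : u ≤ Real.exp h * u :=
    le_mul_of_one_le_left (N.cast_nonneg.trans hN) (Real.one_le_exp hh)
  rw [dilationDiff, hfract hN, hfract (hN.trans hu), sub_sub_sub_cancel_right, neg_sub_neg]
  have := Int.fract_nonneg u
  have := Int.fract_lt_one u
  have := Int.fract_nonneg (Real.exp h * u)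
  have := Int.fract_lt_one (Real.exp h * u)
  exact abs_le.2 ⟨by linarith, by linarith⟩

theorem sq_dilationDiff_tailCount_sub_self_le {N : ℕ} {h u : ℝ} (hh : 0 ≤ h) (hh₁ : h ≤ 1)
    (hN : h * N ≤ 1) (hu : 0 ≤ u) :
    dilationDiff h (fun u ↦ tailCount N u - u) u ^ 2 ≤
      3 * dilationDiff h (tailCount N) u + 4 * min 1 ((h * u) ^ 2) := by
  rcases le_or_gt (h * u) 1 with hhu | hhu
  · rw [min_eq_right (pow_le_one₀ (by positivity) hhu)]
    exact sq_dilationDiff_tailCount_sub_self_le_of_mul_le_one N hh hh₁ hu hhu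
  · have hNu : (N : ℝ) ≤ u := (lt_of_mul_lt_mul_left (hN.trans_lt hhu) hh).le
    rw [min_eq_left (one_le_pow₀ hhu.le)]
    have hsq := (sq_le_one_iff_abs_le_one _).2
      (abs_dilationDiff_tailCount_sub_self_le_one hh hNu)
    linarith [dilationDiff_tailCount_nonneg N hh hu]

end TailCount

section WeightedIntegral

open MeasureTheory Set Asymptotics

theorem integrableOn_rpow_mul_of_mellinConvergent_ofReal {g : ℝ → ℝ} {x : ℝ}
    (hg : MellinConvergent (fun u ↦ (g u : ℂ)) x) :
    IntegrableOn (fun u ↦ u ^ (x - 1) * g u) (Ioi 0) := by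
  refine IntegrableOn.congr_fun hg.re (fun u hu ↦ ?_) measurableSet_Ioi
  have hcpow : (u : ℂ) ^ ((x : ℂ) - 1) = (u ^ (x - 1) : ℝ) := by
    simp [Complex.ofReal_cpow (le_of_lt hu)]
  simp [hcpow]

theorem mellin_ofReal (g : ℝ → ℝ) (x : ℝ) :
    mellin (fun u ↦ (g u : ℂ)) x = ((∫ u in Ioi 0, u ^ (x - 1) * g u : ℝ) : ℂ) := by
  rw [← integral_complex_ofReal, mellin]
  refine setIntegral_congr_fun measurableSet_Ioi fun u hu ↦ ?_
  simp [Complex.ofReal_cpow (le_of_lt hu)]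

theorem integral_rpow_mul_le_norm_mellin (g : ℝ → ℝ) (x : ℝ) :
    ∫ u in Ioi 0, u ^ (x - 1) * g u ≤ ‖mellin (fun u ↦ (g u : ℂ)) x‖ := by
  rw [mellin_ofReal, Complex.norm_real]
  exact le_abs_self _

theorem mellinConvergent_min_one_sq {σ : ℝ} (hσ : 0 < σ) (hσ₁ : σ < 1) :
    MellinConvergent (fun u : ℝ ↦ ((min 1 (u ^ 2) : ℝ) : ℂ)) (-2 * σ : ℝ) := by
  have hnorm (u : ℝ) : ‖((min 1 (u ^ 2) : ℝ) : ℂ)‖ = min 1 (u ^ 2) :=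
    Complex.norm_of_nonneg (by positivity)
  refine mellinConvergent_of_isBigO_rpow (a := 0) (b := -2) ?_ ?_ ?_ ?_ ?_
  · exact (by fun_prop : Continuous fun u : ℝ ↦ ((min 1 (u ^ 2) : ℝ) : ℂ)).locallyIntegrable
      |>.locallyIntegrableOn _
  · exact isBigO_of_le _ fun u ↦ by
      rw [hnorm, neg_zero, Real.rpow_zero, norm_one]
      exact min_le_left _ _
  · simpa using hσ
  · exact isBigO_of_le _ fun u ↦ by
      rw [hnorm, neg_neg, Real.rpow_ofNat, Real.norm_of_nonneg (sq_nonneg u)]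
      exact min_le_right _ _
  · rw [Complex.ofReal_re]
    linarith

theorem norm_mellin_min_one_mul_sq (σ : ℝ) {h : ℝ} (hh : 0 < h) :
    ‖mellin (fun u : ℝ ↦ ((min 1 ((h * u) ^ 2) : ℝ) : ℂ)) (-2 * σ : ℝ)‖ =
      h ^ (2 * σ) * ‖mellin (fun u : ℝ ↦ ((min 1 (u ^ 2) : ℝ) : ℂ)) (-2 * σ : ℝ)‖ := by
  rw [mellin_comp_mul_left (fun u : ℝ ↦ ((min 1 (u ^ 2) : ℝ) : ℂ)) _ hh, norm_smul,
    Complex.norm_cpow_eq_rpow_re_of_pos hh]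
  simp

theorem ofReal_dilationDiff (h : ℝ) (g : ℝ → ℝ) (u : ℝ) :
    ((dilationDiff h g u : ℝ) : ℂ) = dilationDiff h (fun u ↦ (g u : ℂ)) u :=
  Complex.ofReal_sub _ _

theorem hasMellin_ofReal_dilationDiff_tailCount (N : ℕ) {σ : ℝ} (hσ : 1 / 2 < σ) (h : ℝ) :
    HasMellin (fun u ↦ ((dilationDiff h (tailCount N) u : ℝ) : ℂ)) (-2 * σ : ℝ)
      ((Complex.exp (h * (2 * σ)) - 1) *
        ((riemannZeta (2 * σ) - partialZeta N (2 * σ)) / (2 * σ))) := by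
  have htail := hasMellin_tailCount N (s := 2 * σ) (by simp; linarith)
  simpa [ofReal_dilationDiff] using hasMellin_dilationDiff htail h

theorem norm_mellin_dilationDiff_tailCount_le (N : ℕ) {σ h : ℝ} (hσ : 1 / 2 < σ) (hh : 0 < h)
    (hhσ : h * (2 * σ) ≤ 1) :
    ‖mellin (fun u ↦ ((dilationDiff h (tailCount N) u : ℝ) : ℂ)) (-2 * σ : ℝ)‖ ≤
      2 * h * ‖riemannZeta (2 * σ) - partialZeta N (2 * σ)‖ := by
  have hexp : ‖Complex.exp (h * (2 * σ)) - 1‖ ≤ 2 * (h * (2 * σ)) := by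
    have hnorm : ‖(h : ℂ) * (2 * σ)‖ = h * (2 * σ) := by
      rw [show (h : ℂ) * (2 * σ) = (h * (2 * σ) : ℝ) by push_cast; ring]
      exact Complex.norm_of_nonneg (by positivity)
    simpa only [hnorm] using Complex.norm_exp_sub_one_le (hnorm.trans_le hhσ)
  have hden : ‖(2 * σ : ℂ)‖ = 2 * σ := by simp [abs_of_pos (one_half_pos.trans hσ)]
  rw [(hasMellin_ofReal_dilationDiff_tailCount N hσ h).2, norm_mul, norm_div, hden]
  calc _ ≤ 2 * (h * (2 * σ)) * (‖riemannZeta (2 * σ) - partialZeta N (2 * σ)‖ / (2 * σ)) := by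
        gcongr
    _ = _ := by
        field_simp

/-- The weighted square integral `∫_0^∞ u^{-2σ-1} D(u)² du` of `D = dilationDiff h g`, where
`g(u)` is `tailCount N u - u`; by Plancherel it controls the mean square of the tail
`ζ - partialZeta N` on the line `re s = σ`. -/
noncomputable def tailEnergy (N : ℕ) (h σ : ℝ) : ℝ :=
  ∫ u in Ioi 0, u ^ (-2 * σ - 1) * dilationDiff h (fun u ↦ tailCount N u - u) u ^ 2

theorem measurable_dilationDiff {g : ℝ → ℝ} (hg : Measurable g) (h : ℝ) :
    Measurable (dilationDiff h g) :=
  (hg.comp (measurable_const_mul _)).sub hg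

theorem measurable_tailCount (N : ℕ) : Measurable (tailCount N) :=
  (monotone_tailCount N).measurable

theorem integrableOn_rpow_mul_dilationDiff_tailCount (N : ℕ) {σ : ℝ} (hσ : 1 / 2 < σ) (h : ℝ) :
    IntegrableOn (fun u ↦ u ^ (-2 * σ - 1) * dilationDiff h (tailCount N) u) (Ioi 0) :=
  integrableOn_rpow_mul_of_mellinConvergent_ofReal
    (hasMellin_ofReal_dilationDiff_tailCount N hσ h).1

theorem integrableOn_rpow_mul_min_one_mul_sq {σ h : ℝ} (hσ : 0 < σ) (hσ₁ : σ < 1) (hh : 0 < h) :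
    IntegrableOn (fun u ↦ u ^ (-2 * σ - 1) * min 1 ((h * u) ^ 2)) (Ioi 0) :=
  integrableOn_rpow_mul_of_mellinConvergent_ofReal
    ((MellinConvergent.comp_mul_left hh).2 (mellinConvergent_min_one_sq hσ hσ₁))

theorem rpow_mul_sq_dilationDiff_tailCount_sub_self_le {N : ℕ} {h u : ℝ} (hh : 0 ≤ h)
    (hh₁ : h ≤ 1) (hN : h * N ≤ 1) (hu : 0 ≤ u) (x : ℝ) :
    u ^ x * dilationDiff h (fun u ↦ tailCount N u - u) u ^ 2 ≤
      3 * (u ^ x * dilationDiff h (tailCount N) u) + 4 * (u ^ x * min 1 ((h * u) ^ 2)) := by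
  calc u ^ x * dilationDiff h (fun u ↦ tailCount N u - u) u ^ 2
      ≤ u ^ x * (3 * dilationDiff h (tailCount N) u + 4 * min 1 ((h * u) ^ 2)) := by
        gcongr
        exact sq_dilationDiff_tailCount_sub_self_le hh hh₁ hN hu
    _ = _ := by ring

theorem integrableOn_tailEnergy {N : ℕ} {σ h : ℝ} (hσ : 1 / 2 < σ) (hσ₁ : σ < 1) (hh : 0 < h)
    (hh₁ : h ≤ 1) (hN : h * N ≤ 1) :
    IntegrableOn (fun u ↦ u ^ (-2 * σ - 1) * dilationDiff h (fun u ↦ tailCount N u - u) u ^ 2)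
      (Ioi 0) := by
  have hmeas := measurable_dilationDiff ((measurable_tailCount N).sub measurable_id) h
  refine Integrable.mono'
    (((integrableOn_rpow_mul_dilationDiff_tailCount N hσ h).const_mul 3).add
      ((integrableOn_rpow_mul_min_one_mul_sq (one_half_pos.trans hσ) hσ₁ hh).const_mul 4))
    ((measurable_id.pow_const _).mul (hmeas.pow_const 2)).aestronglyMeasurable ?_
  filter_upwards [ae_restrict_mem measurableSet_Ioi] with u hu
  rw [Real.norm_of_nonneg (mul_nonneg (Real.rpow_nonneg (le_of_lt hu) _) (sq_nonneg _))]
  exact rpow_mul_sq_dilationDiff_tailCount_sub_self_le hh.le hh₁ hN (le_of_lt hu) _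

theorem tailEnergy_le {N : ℕ} {σ h : ℝ} (hσ : 1 / 2 < σ) (hσ₁ : σ < 1) (hh : 0 < h)
    (hh₂ : h * 2 ≤ 1) (hN : h * N ≤ 1) :
    tailEnergy N h σ ≤ 6 * ‖riemannZeta (2 * σ) - partialZeta N (2 * σ)‖ * h +
      4 * ‖mellin (fun u : ℝ ↦ ((min 1 (u ^ 2) : ℝ) : ℂ)) (-2 * σ : ℝ)‖ * h ^ (2 * σ) := by
  have hσ₀ := one_half_pos.trans hσ
  have hh₁ : h ≤ 1 := by linarith
  have hjump := integrableOn_rpow_mul_dilationDiff_tailCount N hσ h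
  have hmin := integrableOn_rpow_mul_min_one_mul_sq hσ₀ hσ₁ hh
  calc tailEnergy N h σ
      ≤ ∫ u in Ioi 0, (3 * (u ^ (-2 * σ - 1) * dilationDiff h (tailCount N) u) +
          4 * (u ^ (-2 * σ - 1) * min 1 ((h * u) ^ 2))) :=
        setIntegral_mono_on (integrableOn_tailEnergy hσ hσ₁ hh hh₁ hN)
          ((hjump.const_mul 3).add (hmin.const_mul 4)) measurableSet_Ioi fun u hu ↦
            rpow_mul_sq_dilationDiff_tailCount_sub_self_le hh.le hh₁ hN (le_of_lt hu) _
    _ = 3 * (∫ u in Ioi 0, u ^ (-2 * σ - 1) * dilationDiff h (tailCount N) u) +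
          4 * ∫ u in Ioi 0, u ^ (-2 * σ - 1) * min 1 ((h * u) ^ 2) := by
        rw [integral_add (hjump.const_mul 3) (hmin.const_mul 4), integral_const_mul,
          integral_const_mul]
    _ ≤ 3 * (2 * h * ‖riemannZeta (2 * σ) - partialZeta N (2 * σ)‖) +
          4 * (h ^ (2 * σ) * ‖mellin (fun u : ℝ ↦ ((min 1 (u ^ 2) : ℝ) : ℂ)) (-2 * σ : ℝ)‖) := by
        gcongr
        · exact (integral_rpow_mul_le_norm_mellin _ _).trans
            (norm_mellin_dilationDiff_tailCount_le N hσ hh (by nlinarith))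
        · exact (integral_rpow_mul_le_norm_mellin _ _).trans_eq (norm_mellin_min_one_mul_sq σ hh)
    _ = _ := by ring

theorem tailEnergy_le_add {N : ℕ} {a b σ h : ℝ} (ha : 1 / 2 < a) (hb : b < 1)
    (hσ : σ ∈ Icc a b) (hh : 0 < h) (hh₁ : h ≤ 1) (hN : h * N ≤ 1) :
    tailEnergy N h σ ≤ tailEnergy N h a + tailEnergy N h b := by
  have hint {x : ℝ} (hx : x ∈ Icc a b) :=
    integrableOn_tailEnergy (ha.trans_le hx.1) (hx.2.trans_lt hb) hh hh₁ hN
  have hab := hσ.1.trans hσ.2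
  have hinta := hint (left_mem_Icc.2 hab)
  have hintb := hint (right_mem_Icc.2 hab)
  unfold tailEnergy
  rw [← integral_add hinta hintb]
  refine setIntegral_mono_on (hint hσ) (hinta.add hintb) measurableSet_Ioi fun u hu ↦ ?_
  have hu₀ : 0 < u := hu
  simp only [← add_mul]
  gcongr
  rcases le_total u 1 with hu₁ | hu₁
  · exact (Real.rpow_le_rpow_of_exponent_ge hu₀ hu₁ (by linarith [hσ.2])).trans
      (le_add_of_nonneg_left (by positivity))
  · exact (Real.rpow_le_rpow_of_exponent_le hu₁ (by linarith [hσ.1])).trans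
      (le_add_of_nonneg_right (by positivity))

end WeightedIntegral

section DirichletSeries

theorem iteratedDeriv_const_cpow_neg {c : ℂ} (hc : c ≠ 0) (k : ℕ) :
    iteratedDeriv k (fun s : ℂ ↦ c ^ (-s)) = fun s ↦ (-Complex.log c) ^ k * c ^ (-s) := by
  induction k with
  | zero => simp only [iteratedDeriv_zero, pow_zero, one_mul]
  | succ k ih =>
    ext s
    have hderiv := ((hasDerivAt_neg s).const_cpow (c := c) (.inl hc)).const_mul
      ((-Complex.log c) ^ k)
    rw [iteratedDeriv_succ, ih, hderiv.deriv]
    ring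

theorem contDiff_natCast_cpow_neg {n : ℕ} (hn : n ≠ 0) {k : ℕ∞} :
    ContDiff ℂ k fun s : ℂ ↦ (n : ℂ) ^ (-s) := by
  have hn' : (n : ℂ) ≠ 0 := Nat.cast_ne_zero.2 hn
  simp_rw [Complex.cpow_def_of_ne_zero hn']
  fun_prop

theorem differentiable_partialZeta (N : ℕ) : Differentiable ℂ (partialZeta N) := by
  refine Differentiable.fun_sum fun n hn ↦ ?_
  exact (contDiff_natCast_cpow_neg (k := 1) (by grind)).differentiable (by simp)

theorem iteratedDeriv_partialZeta (N k : ℕ) (s : ℂ) :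
    iteratedDeriv k (partialZeta N) s =
      ∑ n ∈ Finset.Icc 1 N, (-Complex.log n) ^ k * (n : ℂ) ^ (-s) := by
  have hne {n : ℕ} (hn : n ∈ Finset.Icc 1 N) : n ≠ 0 := by grind
  unfold partialZeta
  rw [iteratedDeriv_fun_sum fun n hn ↦ (contDiff_natCast_cpow_neg (hne hn)).contDiffAt]
  exact Finset.sum_congr rfl fun n hn ↦
    congr_fun (iteratedDeriv_const_cpow_neg (Nat.cast_ne_zero.2 (hne hn)) k) s

theorem logMul_iterate_one (k n : ℕ) : LSeries.logMul^[k] 1 n = Complex.log n ^ k := by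
  induction k with
  | zero => simp
  | succ k ih => rw [Function.iterate_succ_apply', LSeries.logMul, ih, pow_succ']

theorem hasSum_iteratedDeriv_riemannZeta (k : ℕ) {s : ℂ} (hs : 1 < s.re) :
    HasSum (fun n : ℕ ↦ (-Complex.log n) ^ k * (n : ℂ) ^ (-s)) (iteratedDeriv k riemannZeta s) := by
  have habs : LSeries.abscissaOfAbsConv 1 < s.re := by
    rw [LSeries.abscissaOfAbsConv_one]
    exact_mod_cast hs
  have hzeta : riemannZeta =ᶠ[nhds s] LSeries 1 := by
    filter_upwards [(isOpen_lt continuous_const Complex.continuous_re).mem_nhds hs] with z hz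
    exact (LSeries_one_eq_riemannZeta hz).symm
  have hpow : LSeries.abscissaOfAbsConv (LSeries.logMul^[k] 1) < s.re := by
    rwa [LSeries.absicssaOfAbsConv_logPowMul]
  have hsum := (LSeriesSummable_of_abscissaOfAbsConv_lt_re hpow).hasSum.mul_left ((-1) ^ k)
  rw [hzeta.iteratedDeriv_eq, LSeries_iteratedDeriv k habs]
  convert! hsum using 2 with n
  rcases eq_or_ne n 0 with rfl | hn
  · have hs0 : s ≠ 0 := by
      rintro rfl
      norm_num at hs
    simp [hs0]
  · rw [LSeries.term_of_ne_zero hn, logMul_iterate_one, Complex.cpow_neg, neg_pow]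
    ring

theorem tendsto_iteratedDeriv_partialZeta (k : ℕ) {s : ℂ} (hs : 1 < s.re) :
    Tendsto (fun N ↦ iteratedDeriv k (partialZeta N) s) atTop
      (nhds (iteratedDeriv k riemannZeta s)) := by
  have hs0 : s ≠ 0 := by
    rintro rfl
    norm_num at hs
  refine ((hasSum_iteratedDeriv_riemannZeta k hs).tendsto_sum_nat.comp
    (tendsto_add_atTop_nat 1)).congr fun N ↦ ?_
  rw [iteratedDeriv_partialZeta, Function.comp_apply, Finset.range_eq_Ico,
    Finset.sum_eq_sum_Ico_succ_bot N.succ_pos]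
  simp [hs0, Finset.Ico_add_one_right_eq_Icc]

end DirichletSeries

section MeanSquareTail

open MeasureTheory Set

theorem setIntegral_norm_sq_riemannZeta_sub_partialZeta_le {N : ℕ} {σ h T : ℝ} (hσ : 1 / 2 < σ)
    (hσ₁ : σ < 1) (hh : 0 < h) (hh₁ : h ≤ 1) (hN : h * N ≤ 1) (hhT : h * (σ + T) ≤ 1 / 2) :
    ∫ t in Icc (-T) T, ‖riemannZeta (σ + t * Complex.I) - partialZeta N (σ + t * Complex.I)‖ ^ 2 ≤
      8 * Real.pi / h ^ 2 * tailEnergy N h σ := by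
  have hσ₀ := one_half_pos.trans hσ
  have hnorm (u : ℝ) : ‖dilationDiff h (fun u ↦ ((tailCount N u - u : ℝ) : ℂ)) u‖ ^ 2 =
      dilationDiff h (fun u ↦ tailCount N u - u) u ^ 2 := by
    rw [← ofReal_dilationDiff h fun u ↦ tailCount N u - u, Complex.norm_real, Real.norm_eq_abs,
      sq_abs]
  have hbound := setIntegral_norm_sq_le_integral_dilationDiff (F := fun s ↦
      riemannZeta s - partialZeta N s) hσ₀.ne' hh (by rwa [abs_of_pos hσ₀])
    (fun t ↦ hasMellin_tailCount_sub_self N (by simpa using hσ₀) (by simpa using hσ₁))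
    (by simpa only [hnorm] using integrableOn_tailEnergy hσ hσ₁ hh hh₁ hN)
  simpa only [hnorm, tailEnergy] using hbound

-- The series part of the bound on `tailEnergy` is `o(1) * h` as `N → ∞`, uniformly in `h`, and the
-- remaining part is `O(h ^ (2 * σ))` with `1 < 2 * σ`.
theorem eventually_tailEnergy_le {σ ε : ℝ} (hσ : 1 / 2 < σ) (hσ₁ : σ < 1) (hε : 0 < ε) :
    ∀ᶠ N in atTop, ∀ᶠ h in nhdsWithin (0 : ℝ) (Ioi 0), tailEnergy N h σ ≤ ε * h := by
  set K := ‖mellin (fun u : ℝ ↦ ((min 1 (u ^ 2) : ℝ) : ℂ)) (-2 * σ : ℝ)‖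
  have hseries : ∀ᶠ N in atTop, 6 * ‖riemannZeta (2 * σ) - partialZeta N (2 * σ)‖ < ε / 2 := by
    have hlim := ((tendsto_iteratedDeriv_partialZeta 0 (s := 2 * σ)
      (by simp; linarith)).const_sub (riemannZeta (2 * σ))).norm.const_mul 6
    simp only [iteratedDeriv_zero, sub_self, norm_zero, mul_zero] at hlim
    exact hlim.eventually_lt_const (half_pos hε)
  have hpow : ∀ᶠ h in nhdsWithin (0 : ℝ) (Ioi 0), 4 * K * h ^ (2 * σ - 1) < ε / 2 := by
    have hlim := (Real.continuousAt_rpow_const 0 (2 * σ - 1)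
      (.inr (by linarith))).tendsto.const_mul (4 * K)
    rw [Real.zero_rpow (by linarith), mul_zero] at hlim
    exact nhdsWithin_le_nhds (hlim.eventually_lt_const (half_pos hε))
  filter_upwards [hseries] with N hN
  have hsmall : ∀ᶠ h in nhdsWithin (0 : ℝ) (Ioi 0), h * (N : ℝ) ≤ 1 := by
    have hlim := (continuous_mul_const (N : ℝ)).tendsto 0
    rw [zero_mul] at hlim
    exact nhdsWithin_le_nhds (hlim.eventually_le_const one_pos)
  filter_upwards [hpow, hsmall, Ioo_mem_nhdsGT one_half_pos] with h hh hhN hh₀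
  calc tailEnergy N h σ
      ≤ 6 * ‖riemannZeta (2 * σ) - partialZeta N (2 * σ)‖ * h + 4 * K * h ^ (2 * σ) :=
        tailEnergy_le hσ hσ₁ hh₀.1 (by linarith [hh₀.2]) hhN
    _ = 6 * ‖riemannZeta (2 * σ) - partialZeta N (2 * σ)‖ * h + 4 * K * h ^ (2 * σ - 1) * h := by
        rw [mul_assoc (4 * K), ← Real.rpow_add_one hh₀.1.ne', sub_add_cancel]
    _ ≤ ε / 2 * h + ε / 2 * h := by
        have := hh₀.1
        gcongr
    _ = ε * h := by ring

theorem eventually_setIntegral_norm_sq_riemannZeta_sub_partialZeta_le {a b ε : ℝ}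
    (ha : 1 / 2 < a) (hb : b < 1) (hε : 0 < ε) :
    ∀ᶠ N in atTop, ∀ᶠ T : ℝ in atTop, ∀ σ ∈ Icc a b,
      ∫ t in Icc (-T) T,
        ‖riemannZeta (σ + t * Complex.I) - partialZeta N (σ + t * Complex.I)‖ ^ 2 ≤ ε * T := by
  rcases lt_or_ge b a with hab | hab
  · simp [Icc_eq_empty_of_lt hab]
  have hδ : 0 < ε / (64 * Real.pi) := by positivity
  have hscale : Tendsto (fun T : ℝ ↦ (4 * T)⁻¹) atTop (nhdsWithin 0 (Ioi 0)) :=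
    tendsto_inv_atTop_nhdsGT_zero.comp (tendsto_id.const_mul_atTop four_pos)
  filter_upwards [eventually_tailEnergy_le ha (hab.trans_lt hb) hδ,
    eventually_tailEnergy_le (ha.trans_le hab) hb hδ] with N hNa hNb
  filter_upwards [hscale.eventually hNa, hscale.eventually hNb, eventually_ge_atTop 1,
    eventually_ge_atTop (N : ℝ)] with T hTa hTb hT hTN σ hσ
  have : 0 < T := one_pos.trans_le hT
  have hh : 0 < (4 * T)⁻¹ := by positivity
  have hh₁ : (4 * T)⁻¹ ≤ 1 := inv_le_one_of_one_le₀ (by linarith)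
  have hN : (4 * T)⁻¹ * N ≤ 1 := by
    rw [inv_mul_le_iff₀ (by positivity)]
    linarith
  calc _ ≤ 8 * Real.pi / (4 * T)⁻¹ ^ 2 * tailEnergy N (4 * T)⁻¹ σ := by
        refine setIntegral_norm_sq_riemannZeta_sub_partialZeta_le (ha.trans_le hσ.1)
          (hσ.2.trans_lt hb) hh hh₁ hN ?_
        rw [inv_mul_le_iff₀ (by positivity)]
        linarith [hσ.2]
    _ ≤ 8 * Real.pi / (4 * T)⁻¹ ^ 2 *
          (ε / (64 * Real.pi) * (4 * T)⁻¹ + ε / (64 * Real.pi) * (4 * T)⁻¹) := by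
        gcongr
        exact (tailEnergy_le_add ha hb hσ hh hh₁ hN).trans (add_le_add hTa hTb)
    _ = ε * T := by
        field_simp
        norm_num

end MeanSquareTail

section CauchyMeanSquare

open MeasureTheory Set Metric

variable {E : Type*} [NormedAddCommGroup E]

theorem norm_sq_circleAverage_le [NormedSpace ℝ E] [CompleteSpace E] {f : ℂ → E} {c : ℂ} {R : ℝ}
    (hR : 0 ≤ R) (hf : ContinuousOn f (sphere c R)) :
    ‖Real.circleAverage f c R‖ ^ 2 ≤ Real.circleAverage (fun z ↦ ‖f z‖ ^ 2) c R := by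
  simp only [Real.circleAverage_eq_intervalAverage]
  refine (convexOn_univ_norm.pow (fun x _ ↦ norm_nonneg x) 2).map_set_average_le
    (continuous_norm.pow 2).continuousOn isClosed_univ ?_ ?_ (.of_forall fun _ ↦ mem_univ _)
    (hf.circleIntegrable hR).def' ((hf.norm.pow 2).circleIntegrable hR).def'
  · simp [uIoc_of_le Real.two_pi_pos.le, Real.pi_pos]
  · simp [uIoc_of_le Real.two_pi_pos.le, ENNReal.mul_eq_top]

theorem circleAverage_inv_sub_pow_smul [NormedSpace ℂ E] [CompleteSpace E] {f : ℂ → E} {c : ℂ}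
    {R : ℝ} (hR : 0 < R) (n : ℕ) (hf : DiffContOnCl ℂ f (ball c R)) :
    Real.circleAverage (fun z ↦ ((z - c) ^ n)⁻¹ • f z) c R =
      (n.factorial : ℂ)⁻¹ • iteratedDeriv n f c := by
  have hkernel (z : ℂ) : (z - c)⁻¹ • ((z - c) ^ n)⁻¹ • f z = (1 / (z - c) ^ (n + 1)) • f z := by
    rw [smul_smul, ← mul_inv, ← pow_succ', one_div]
  simp only [Real.circleAverage_eq_circleIntegral hR.ne', hkernel,
    hf.circleIntegral_one_div_sub_center_pow_smul hR n, smul_smul]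
  rw [← mul_div_assoc, inv_mul_cancel₀ Complex.two_pi_I_ne_zero, one_div]

theorem norm_sq_iteratedDeriv_le_circleAverage [NormedSpace ℂ E] [CompleteSpace E] {f : ℂ → E}
    {c : ℂ} {R : ℝ} (hR : 0 < R) (n : ℕ) (hf : DiffContOnCl ℂ f (ball c R)) :
    ‖iteratedDeriv n f c‖ ^ 2 ≤
      (n.factorial / R ^ n) ^ 2 * Real.circleAverage (fun z ↦ ‖f z‖ ^ 2) c R := by
  have hcont : ContinuousOn (fun z ↦ ((z - c) ^ n)⁻¹ • f z) (sphere c R) := by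
    refine .smul (.inv₀ (by fun_prop) fun z hz ↦ ?_)
      (hf.continuousOn_ball.mono sphere_subset_closedBall)
    exact pow_ne_zero n (sub_ne_zero.2 (ne_of_mem_sphere hz hR.ne'))
  have hsphere : EqOn (fun z ↦ ‖((z - c) ^ n)⁻¹ • f z‖ ^ 2)
      (fun z ↦ ((R ^ n)⁻¹ ^ 2) • ‖f z‖ ^ 2) (sphere c |R|) := fun z hz ↦ by
    rw [abs_of_pos hR, mem_sphere, dist_eq_norm] at hz
    simp only [norm_smul, norm_inv, norm_pow, hz, mul_pow, smul_eq_mul]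
  have hjensen := norm_sq_circleAverage_le hR.le hcont
  rw [circleAverage_inv_sub_pow_smul hR n hf, Real.circleAverage_congr_sphere hsphere,
    Real.circleAverage_fun_smul, norm_smul, norm_inv, Complex.norm_natCast, mul_pow,
    smul_eq_mul, inv_pow, inv_mul_le_iff₀ (by positivity)] at hjensen
  rwa [div_eq_mul_inv, mul_pow, mul_assoc]

theorem circleMap_add_mul_I (σ t r θ : ℝ) :
    circleMap (σ + t * Complex.I) r θ =
      ((σ + r * Real.cos θ : ℝ) : ℂ) + ((t + r * Real.sin θ : ℝ) : ℂ) * Complex.I := by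
  rw [circleMap, Complex.exp_mul_I]
  push_cast
  ring

theorem closedBall_subset_re_preimage (σ t r : ℝ) :
    closedBall (σ + t * Complex.I) r ⊆ Complex.re ⁻¹' closedBall σ r := fun z hz ↦ by
  have hre := (Complex.abs_re_le_norm _).trans (mem_closedBall_iff_norm.1 hz)
  simpa [Real.dist_eq] using hre

theorem continuous_comp_circleMap_line {X : Type*} [TopologicalSpace X] {f : ℂ → X} {σ r : ℝ}
    (hr : 0 ≤ r) (hf : ContinuousOn f (Complex.re ⁻¹' closedBall σ r)) :
    Continuous (Function.uncurry fun t θ : ℝ ↦ f (circleMap (σ + t * Complex.I) r θ)) :=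
  hf.comp_continuous (f := fun p : ℝ × ℝ ↦ circleMap (σ + p.1 * Complex.I) r p.2)
    (by simp only [circleMap]; fun_prop) fun p ↦
    closedBall_subset_re_preimage σ p.1 r (circleMap_mem_closedBall _ hr _)

theorem integral_circleMap_line_le {g : ℂ → ℝ} {σ r a b B : ℝ} (hr : 0 ≤ r) (hab : a ≤ b)
    (hg : ContinuousOn g (Complex.re ⁻¹' closedBall σ r)) (hg₀ : ∀ z, 0 ≤ g z)
    (hB : ∀ x ∈ closedBall σ r, ∫ t in Icc (a - r) (b + r), g (x + t * Complex.I) ≤ B) (θ : ℝ) :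
    ∫ t in a..b, g (circleMap (σ + t * Complex.I) r θ) ≤ B := by
  have hcos : |r * Real.cos θ| ≤ r := by
    simpa [abs_mul, abs_of_nonneg hr] using mul_le_of_le_one_right hr (Real.abs_cos_le_one θ)
  have hsin : |r * Real.sin θ| ≤ r := by
    simpa [abs_mul, abs_of_nonneg hr] using mul_le_of_le_one_right hr (Real.abs_sin_le_one θ)
  simp only [circleMap_add_mul_I]
  set x := σ + r * Real.cos θ
  have hx : x ∈ closedBall σ r := by simpa [x, mem_closedBall_iff_norm] using hcos
  have hcont : Continuous fun t : ℝ ↦ g (x + t * Complex.I) :=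
    hg.comp_continuous (by fun_prop) fun t ↦ by simpa using hx
  rw [intervalIntegral.integral_comp_add_right (fun t : ℝ ↦ g (x + t * Complex.I)),
    intervalIntegral.integral_of_le (by linarith)]
  refine (setIntegral_mono_set hcont.integrableOn_Icc (.of_forall fun _ ↦ hg₀ _)
    (LE.le.eventuallyLE ?_)).trans (hB _ hx)
  exact Ioc_subset_Icc_self.trans
    (Icc_subset_Icc (by linarith [abs_le.1 hsin]) (by linarith [abs_le.1 hsin]))

theorem setIntegral_circleAverage_le {g : ℂ → ℝ} {σ r a b B : ℝ} (hr : 0 ≤ r) (hab : a ≤ b)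
    (hg : ContinuousOn g (Complex.re ⁻¹' closedBall σ r)) (hg₀ : ∀ z, 0 ≤ g z)
    (hB : ∀ x ∈ closedBall σ r, ∫ t in Icc (a - r) (b + r), g (x + t * Complex.I) ≤ B) :
    ∫ t in Ioc a b, Real.circleAverage g (σ + t * Complex.I) r ≤ B := by
  have hcont := continuous_comp_circleMap_line hr hg
  have hcontInt : Continuous fun θ ↦ ∫ t in a..b, g (circleMap (σ + t * Complex.I) r θ) :=
    intervalIntegral.continuous_parametric_intervalIntegral_of_continuous'
      (f := fun θ t : ℝ ↦ g (circleMap (σ + t * Complex.I) r θ)) (hcont.comp continuous_swap) a b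
  simp only [Real.circleAverage_def, smul_eq_mul]
  rw [integral_const_mul, ← intervalIntegral.integral_of_le hab,
    inv_mul_le_iff₀ Real.two_pi_pos,
    intervalIntegral_intervalIntegral_swap ((hcont.continuousOn.integrableOn_compact
      (isCompact_uIcc.prod isCompact_uIcc)).mono_set (prod_mono uIoc_subset_uIcc uIoc_subset_uIcc))]
  calc ∫ θ in 0..2 * Real.pi, ∫ t in a..b, g (circleMap (σ + t * Complex.I) r θ)
      ≤ ∫ _ in 0..2 * Real.pi, B :=
        intervalIntegral.integral_mono Real.two_pi_pos.le (hcontInt.intervalIntegrable _ _)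
          (by simp) (integral_circleMap_line_le hr hab hg hg₀ hB)
    _ = 2 * Real.pi * B := by simp

theorem continuous_circleAverage_line {g : ℂ → ℝ} {σ r : ℝ} (hr : 0 ≤ r)
    (hg : ContinuousOn g (Complex.re ⁻¹' closedBall σ r)) :
    Continuous fun t : ℝ ↦ Real.circleAverage g (σ + t * Complex.I) r := by
  have hcont : Continuous fun t : ℝ ↦
      ∫ θ in 0..2 * Real.pi, g (circleMap (σ + t * Complex.I) r θ) :=
    intervalIntegral.continuous_parametric_intervalIntegral_of_continuous'
      (continuous_comp_circleMap_line hr hg) _ _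
  simpa only [Real.circleAverage_def] using hcont.fun_const_smul (2 * Real.pi)⁻¹

theorem setIntegral_norm_sq_iteratedDeriv_le [NormedSpace ℂ E] [CompleteSpace E] {f : ℂ → E}
    {σ r a b B : ℝ} (n : ℕ) (hr : 0 < r) (hab : a ≤ b)
    (hf : DiffContOnCl ℂ f (Complex.re ⁻¹' ball σ r))
    (hB : ∀ x ∈ closedBall σ r, ∫ t in Icc (a - r) (b + r), ‖f (x + t * Complex.I)‖ ^ 2 ≤ B) :
    ∫ t in Ioc a b, ‖iteratedDeriv n f (σ + t * Complex.I)‖ ^ 2 ≤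
      (n.factorial / r ^ n) ^ 2 * B := by
  have hcont : ContinuousOn (fun z ↦ ‖f z‖ ^ 2) (Complex.re ⁻¹' closedBall σ r) := by
    have := hf.continuousOn
    rw [Complex.closure_preimage_re, closure_ball σ hr.ne'] at this
    exact this.norm.pow 2
  have hball (t : ℝ) : ball (σ + t * Complex.I) r ⊆ Complex.re ⁻¹' ball σ r := fun z hz ↦ by
    have hre := (Complex.abs_re_le_norm _).trans_lt (mem_ball_iff_norm.1 hz)
    simpa [Real.dist_eq] using hre
  calc ∫ t in Ioc a b, ‖iteratedDeriv n f (σ + t * Complex.I)‖ ^ 2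
      ≤ ∫ t in Ioc a b, (n.factorial / r ^ n) ^ 2 *
          Real.circleAverage (fun z ↦ ‖f z‖ ^ 2) (σ + t * Complex.I) r :=
        integral_mono_of_nonneg (.of_forall fun _ ↦ by positivity)
          ((continuous_circleAverage_line hr.le hcont).const_mul _).integrableOn_Ioc
          (.of_forall fun t ↦ norm_sq_iteratedDeriv_le_circleAverage hr n (hf.mono (hball t)))
    _ ≤ (n.factorial / r ^ n) ^ 2 * B := by
        rw [integral_const_mul]
        gcongr
        exact setIntegral_circleAverage_le hr.le hab hcont (fun _ ↦ by positivity) hB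

end CauchyMeanSquare

section MeanSquare

open MeasureTheory Set ComplexConjugate

/-- The mean square of `f` over `(0, T]`, whose limit as `T → ∞` is the object of mean value
theorems for Dirichlet series. It is `0` at `T = 0`. -/
noncomputable def meanSquare {E : Type*} [NormedAddCommGroup E] (f : ℝ → E) (T : ℝ) : ℝ :=
  (∫ t in Ioc 0 T, ‖f t‖ ^ 2) / T

theorem abs_norm_sq_sub_norm_sq_le {E : Type*} [SeminormedAddCommGroup E] (x y : E) {η : ℝ}
    (hη : 0 < η) : |‖x‖ ^ 2 - ‖y‖ ^ 2| ≤ (1 + η⁻¹) * ‖x - y‖ ^ 2 + η * ‖y‖ ^ 2 := by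
  have hdiff := abs_norm_sub_norm_le x y
  have hyoung : 2 * (‖x - y‖ * ‖y‖) ≤ η⁻¹ * ‖x - y‖ ^ 2 + η * ‖y‖ ^ 2 := by
    have hsq : 0 ≤ η⁻¹ * (‖x - y‖ - η * ‖y‖) ^ 2 := by positivity
    have hexpand : η⁻¹ * (‖x - y‖ - η * ‖y‖) ^ 2 =
        η⁻¹ * ‖x - y‖ ^ 2 - 2 * (‖x - y‖ * ‖y‖) + η * ‖y‖ ^ 2 := by
      field_simp
      ring
    linarith
  calc |‖x‖ ^ 2 - ‖y‖ ^ 2| = |‖x‖ - ‖y‖| * |(‖x‖ - ‖y‖) + 2 * ‖y‖| := by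
        rw [← abs_mul]
        ring_nf
    _ ≤ ‖x - y‖ * (‖x - y‖ + 2 * ‖y‖) := by
        gcongr
        refine (abs_add_le _ _).trans (add_le_add hdiff ?_)
        rw [abs_of_nonneg (by positivity)]
    _ ≤ (1 + η⁻¹) * ‖x - y‖ ^ 2 + η * ‖y‖ ^ 2 := by linarith

variable {E : Type*} [NormedAddCommGroup E]

theorem abs_meanSquare_sub_le {f g : ℝ → E} (hf : Continuous f) (hg : Continuous g) {η T : ℝ}
    (hη : 0 < η) (hT : 0 < T) :
    |meanSquare f T - meanSquare g T| ≤
      (1 + η⁻¹) * meanSquare (f - g) T + η * meanSquare g T := by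
  have hint {F : ℝ → E} (hF : Continuous F) : IntegrableOn (fun t ↦ ‖F t‖ ^ 2) (Ioc 0 T) :=
    (hF.norm.pow 2).integrableOn_Ioc
  have hfg := hint (hf.sub hg)
  simp only [meanSquare]
  rw [← sub_div, abs_div, abs_of_pos hT, mul_div_assoc', mul_div_assoc', ← add_div,
    div_le_div_iff_of_pos_right hT, ← integral_sub (hint hf) (hint hg), ← integral_const_mul,
    ← integral_const_mul, ← integral_add (hfg.const_mul _) ((hint hg).const_mul _)]
  exact abs_integral_le_integral_abs.trans <|
    integral_mono ((hint hf).sub (hint hg)).abs ((hfg.const_mul _).add ((hint hg).const_mul _))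
      fun t ↦ abs_norm_sq_sub_norm_sq_le _ _ hη

theorem tendsto_meanSquare_of_approx {ι : Type*} {l : Filter ι} [l.NeBot] {f : ℝ → E}
    {p : ι → ℝ → E} {c : ι → ℝ} {C : ℝ} (hf : Continuous f) (hp : ∀ i, Continuous (p i))
    (happrox : ∀ ε > 0, ∀ᶠ i in l, ∀ᶠ T in atTop, meanSquare (f - p i) T ≤ ε)
    (hmean : ∀ i, Tendsto (meanSquare (p i)) atTop (nhds (c i))) (hc : Tendsto c l (nhds C)) :
    Tendsto (meanSquare f) atTop (nhds C) := by
  rw [Metric.tendsto_nhds]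
  intro ε hε
  obtain ⟨η, hη, hηC⟩ : ∃ η > 0, η * (C + 1) < ε / 3 := by
    have hlim := (continuous_mul_const (C + 1)).tendsto 0
    rw [zero_mul] at hlim
    have hsmall := (hlim.eventually_lt_const (by positivity : 0 < ε / 3)).filter_mono
      (nhdsWithin_le_nhds (s := Ioi 0))
    exact (eventually_mem_nhdsWithin.and hsmall).exists
  have hδ : 0 < ε / 3 / (1 + η⁻¹) := by positivity
  have hball : Metric.ball C (min 1 (ε / 3)) ∈ nhds C := Metric.ball_mem_nhds C (by positivity)
  obtain ⟨i, happrox, hci⟩ :=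
    ((happrox _ hδ).and (hc.eventually (eventually_mem_nhds_iff.2 hball))).exists
  filter_upwards [happrox, (hmean i).eventually hci, eventually_gt_atTop 0] with T hfp hpC hT
  rw [lt_min_iff, Real.dist_eq] at hpC
  have hclose : |meanSquare f T - meanSquare (p i) T| ≤ ε / 3 + η * (C + 1) :=
    (abs_meanSquare_sub_le hf (hp i) hη hT).trans <| by
      gcongr
      · rwa [le_div_iff₀' (by positivity)] at hfp
      · linarith [(abs_lt.1 hpC.1).2]
  rw [Real.dist_eq]
  linarith [abs_sub_le (meanSquare f T) (meanSquare (p i) T) C]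

theorem tendsto_mean_cexp (ω : ℝ) :
    Tendsto (fun T : ℝ ↦ (∫ t in Ioc 0 T, Complex.exp (ω * t * Complex.I)) / (T : ℂ)) atTop
      (nhds (if ω = 0 then 1 else 0)) := by
  split_ifs with hω
  · refine tendsto_const_nhds.congr' ?_
    filter_upwards [eventually_gt_atTop 0] with T hT
    simp [hω, hT.le, hT.ne']
  · have hbound (T : ℝ) (hT : 0 < T) :
        ‖(∫ t in Ioc 0 T, Complex.exp (ω * t * Complex.I)) / (T : ℂ)‖ ≤ 2 / |ω| * T⁻¹ := by
      have hωI : (ω * Complex.I : ℂ) ≠ 0 := by simpa using hω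
      have hnum : ‖Complex.exp (ω * Complex.I * T) - 1‖ ≤ 2 := by
        refine (norm_sub_le _ _).trans_eq ?_
        rw [mul_right_comm, ← Complex.ofReal_mul, Complex.norm_exp_ofReal_mul_I, norm_one]
        norm_num
      simp only [mul_right_comm (ω : ℂ) _ Complex.I]
      rw [← intervalIntegral.integral_of_le hT.le, integral_exp_mul_complex hωI,
        Complex.ofReal_zero, mul_zero, Complex.exp_zero, norm_div, norm_div, norm_mul,
        Complex.norm_I, mul_one, Complex.norm_real, Complex.norm_real, Real.norm_eq_abs,
        Real.norm_of_nonneg hT.le, div_eq_mul_inv _ T]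
      gcongr
    refine squeeze_zero_norm' ((eventually_gt_atTop 0).mono hbound) ?_
    simpa using tendsto_inv_atTop_zero.const_mul (2 / |ω|)

theorem ofReal_norm_sq_sum_mul_cexp {ι : Type*} (s : Finset ι) (a : ι → ℂ) (ω : ι → ℝ) (t : ℝ) :
    ((‖∑ i ∈ s, a i * Complex.exp (ω i * t * Complex.I)‖ ^ 2 : ℝ) : ℂ) =
      ∑ i ∈ s, ∑ j ∈ s,
        a i * conj (a j) * Complex.exp ((ω i - ω j : ℝ) * t * Complex.I) := by
  rw [Complex.ofReal_pow, ← Complex.mul_conj', map_sum, Finset.sum_mul_sum]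
  refine Finset.sum_congr rfl fun i _ ↦ Finset.sum_congr rfl fun j _ ↦ ?_
  rw [map_mul, ← Complex.exp_conj, mul_mul_mul_comm, ← Complex.exp_add]
  congr 2
  simp only [map_mul, Complex.conj_ofReal, Complex.conj_I, Complex.ofReal_sub]
  ring

theorem tendsto_meanSquare_sum_mul_cexp {ι : Type*} (s : Finset ι) (a : ι → ℂ) {ω : ι → ℝ}
    (hω : InjOn ω s) :
    Tendsto (meanSquare fun t ↦ ∑ i ∈ s, a i * Complex.exp (ω i * t * Complex.I)) atTop
      (nhds (∑ i ∈ s, ‖a i‖ ^ 2)) := by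
  have hcont (i j : ι) : Continuous fun t : ℝ ↦
      a i * conj (a j) * Complex.exp ((ω i - ω j : ℝ) * t * Complex.I) := by fun_prop
  have hterms : Tendsto (fun T : ℝ ↦ ∑ i ∈ s, ∑ j ∈ s, a i * conj (a j) *
        ((∫ t in Ioc 0 T, Complex.exp ((ω i - ω j : ℝ) * t * Complex.I)) / (T : ℂ))) atTop
      (nhds (∑ i ∈ s, ∑ j ∈ s, a i * conj (a j) * if ω i - ω j = 0 then 1 else 0)) :=
    tendsto_finsetSum _ fun i _ ↦ tendsto_finsetSum _ fun j _ ↦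
      (tendsto_mean_cexp _).const_mul _
  have hdiag : ∑ i ∈ s, ∑ j ∈ s, a i * conj (a j) * (if ω i - ω j = 0 then 1 else 0) =
      ((∑ i ∈ s, ‖a i‖ ^ 2 : ℝ) : ℂ) := by
    rw [Complex.ofReal_sum]
    refine Finset.sum_congr rfl fun i hi ↦ ?_
    rw [Finset.sum_eq_single_of_mem i hi fun j hj hji ↦ ?_]
    · simp [Complex.mul_conj']
    · rw [if_neg fun h ↦ hji (hω hj hi (sub_eq_zero.1 h).symm), mul_zero]
  rw [hdiag] at hterms
  refine tendsto_ofReal_iff.1 (hterms.congr fun T ↦ ?_)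
  simp only [meanSquare, Complex.ofReal_div]
  rw [← integral_complex_ofReal]
  simp only [ofReal_norm_sq_sum_mul_cexp]
  rw [integral_finsetSum _ fun i _ ↦ integrable_finsetSum _ fun j _ ↦ (hcont i j).integrableOn_Ioc,
    Finset.sum_div]
  refine Finset.sum_congr rfl fun i _ ↦ ?_
  rw [integral_finsetSum _ fun j _ ↦ (hcont i j).integrableOn_Ioc, Finset.sum_div]
  simp only [integral_const_mul, mul_div_assoc]

end MeanSquare

section SecondMoment

open MeasureTheory Set

theorem analyticOnNhd_riemannZeta : AnalyticOnNhd ℂ riemannZeta {1}ᶜ :=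
  DifferentiableOn.analyticOnNhd
    (fun _ hs ↦ (differentiableAt_riemannZeta hs).differentiableWithinAt) isOpen_compl_singleton

theorem add_mul_I_ne_one {σ : ℝ} (hσ : σ ≠ 1) (t : ℝ) : (σ + t * Complex.I : ℂ) ≠ 1 :=
  fun h ↦ hσ (by simpa using congrArg Complex.re h)

theorem continuous_iteratedDeriv_riemannZeta_line (k : ℕ) {σ : ℝ} (hσ : σ ≠ 1) :
    Continuous fun t : ℝ ↦ iteratedDeriv k riemannZeta (σ + t * Complex.I) := by
  have hcont := (analyticOnNhd_riemannZeta.iterated_deriv k).continuousOn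
  rw [← iteratedDeriv_eq_iterate] at hcont
  exact hcont.comp_continuous (by fun_prop) (add_mul_I_ne_one hσ)

theorem continuous_iteratedDeriv_partialZeta_line (N k : ℕ) (σ : ℝ) :
    Continuous fun t : ℝ ↦ iteratedDeriv k (partialZeta N) (σ + t * Complex.I) :=
  ((differentiable_partialZeta N).contDiff.continuous_iteratedDeriv k le_top).comp
    (by fun_prop : Continuous fun t : ℝ ↦ (σ + t * Complex.I : ℂ))

theorem diffContOnCl_riemannZeta_sub_partialZeta (N : ℕ) {σ r : ℝ} (hr : r ≠ 0)
    (hσr : σ + r < 1) :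
    DiffContOnCl ℂ (riemannZeta - partialZeta N) (Complex.re ⁻¹' Metric.ball σ r) := by
  refine DifferentiableOn.diffContOnCl fun z hz ↦ ?_
  rw [Complex.closure_preimage_re, closure_ball σ hr] at hz
  have hz₁ : z ≠ 1 := by
    rintro rfl
    have := (abs_le.1 (mem_closedBall_iff_norm.1 hz)).2
    simp only [Complex.one_re] at this
    linarith
  exact ((differentiableAt_riemannZeta hz₁).sub
    (differentiable_partialZeta N z)).differentiableWithinAt

theorem iteratedDeriv_riemannZeta_sub_partialZeta (N k : ℕ) {s : ℂ} (hs : s ≠ 1) :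
    iteratedDeriv k (riemannZeta - partialZeta N) s =
      iteratedDeriv k riemannZeta s - iteratedDeriv k (partialZeta N) s :=
  iteratedDeriv_sub (analyticOnNhd_riemannZeta _ hs).contDiffAt
    (differentiable_partialZeta N).contDiff.contDiffAt

theorem eventually_meanSquare_iteratedDeriv_riemannZeta_sub_le (k : ℕ) {σ ε : ℝ}
    (hσ : 1 / 2 < σ) (hσ₁ : σ < 1) (hε : 0 < ε) :
    ∀ᶠ N in atTop, ∀ᶠ T in atTop, meanSquare ((fun t : ℝ ↦
        iteratedDeriv k riemannZeta (σ + t * Complex.I)) - fun t : ℝ ↦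
        iteratedDeriv k (partialZeta N) (σ + t * Complex.I)) T ≤ ε := by
  obtain ⟨r, hr, hrσ⟩ : ∃ r > 0, r < min (σ - 1 / 2) (1 - σ) :=
    exists_between (lt_min (by linarith) (by linarith))
  rw [lt_min_iff] at hrσ
  have hδ : 0 < ε / (2 * (k.factorial / r ^ k) ^ 2) := by positivity
  filter_upwards [eventually_setIntegral_norm_sq_riemannZeta_sub_partialZeta_le
    (a := σ - r) (b := σ + r) (by linarith) (by linarith) hδ] with N hN
  have hshift : Tendsto (fun T : ℝ ↦ T + r) atTop atTop :=
    tendsto_atTop_add_const_right _ r tendsto_id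
  filter_upwards [hshift.eventually hN, eventually_gt_atTop 0, eventually_ge_atTop r]
    with T hT hT₀ hTr
  have hcauchy := setIntegral_norm_sq_iteratedDeriv_le (a := -T) k hr (by linarith)
    (diffContOnCl_riemannZeta_sub_partialZeta N (σ := σ) hr.ne' (by linarith))
    fun x hx ↦ by simpa only [neg_add', Pi.sub_apply] using hT x (by rwa [← Real.closedBall_eq_Icc])
  simp only [iteratedDeriv_riemannZeta_sub_partialZeta N k (add_mul_I_ne_one hσ₁.ne _)] at hcauchy
  have hint : IntegrableOn (fun t : ℝ ↦ ‖iteratedDeriv k riemannZeta (σ + t * Complex.I) -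
      iteratedDeriv k (partialZeta N) (σ + t * Complex.I)‖ ^ 2) (Ioc (-T) T) :=
    (((continuous_iteratedDeriv_riemannZeta_line k hσ₁.ne).sub
      (continuous_iteratedDeriv_partialZeta_line N k σ)).norm.pow 2).integrableOn_Ioc
  rw [meanSquare, div_le_iff₀ hT₀]
  calc _ ≤ _ := setIntegral_mono_set hint (.of_forall fun _ ↦ by positivity)
        (Ioc_subset_Ioc_left (by linarith)).eventuallyLE
    _ ≤ (k.factorial / r ^ k) ^ 2 * (ε / (2 * (k.factorial / r ^ k) ^ 2) * (T + r)) := hcauchy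
    _ = ε * ((T + r) / 2) := by field_simp
    _ ≤ ε * T := by
        gcongr
        linarith

theorem neg_log_pow_mul_cpow_eq_ofReal (k n : ℕ) (x : ℝ) :
    (-Complex.log n) ^ k * (n : ℂ) ^ (-x : ℂ) = ((-Real.log n) ^ k * (n : ℝ) ^ (-x) : ℝ) := by
  rw [Complex.ofReal_mul, Complex.ofReal_pow, Complex.ofReal_neg, Complex.natCast_log,
    Complex.ofReal_cpow n.cast_nonneg, Complex.ofReal_neg, Complex.ofReal_natCast]

theorem re_neg_log_pow_mul_cpow (k n : ℕ) (σ : ℝ) :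
    ((-Complex.log n) ^ (2 * k) * (n : ℂ) ^ (-(2 * σ : ℝ) : ℂ)).re =
      ‖(-Complex.log n) ^ k * (n : ℂ) ^ (-σ : ℂ)‖ ^ 2 := by
  rw [neg_log_pow_mul_cpow_eq_ofReal, neg_log_pow_mul_cpow_eq_ofReal, Complex.ofReal_re,
    Complex.norm_real, Real.norm_eq_abs, sq_abs, mul_pow, ← pow_mul, mul_comm 2 k, mul_comm 2 σ,
    ← neg_mul, Real.rpow_mul n.cast_nonneg, Real.rpow_two]

theorem tendsto_meanSquare_iteratedDeriv_partialZeta (N k : ℕ) (σ : ℝ) :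
    Tendsto (meanSquare fun t : ℝ ↦ iteratedDeriv k (partialZeta N) (σ + t * Complex.I)) atTop
      (nhds (iteratedDeriv (2 * k) (partialZeta N) (2 * σ : ℝ)).re) := by
  have hω : InjOn (fun n : ℕ ↦ -Real.log n) (Finset.Icc 1 N) := fun m hm n hn h ↦
    Nat.cast_injective <| Real.log_injOn_pos (mem_Ioi.2 (Nat.cast_pos.2 (Finset.mem_Icc.1 hm).1))
      (mem_Ioi.2 (Nat.cast_pos.2 (Finset.mem_Icc.1 hn).1)) (neg_injective h)
  convert! tendsto_meanSquare_sum_mul_cexp (Finset.Icc 1 N)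
    (fun n ↦ (-Complex.log n) ^ k * (n : ℂ) ^ (-σ : ℂ)) hω using 2
  · refine funext fun t ↦ (iteratedDeriv_partialZeta N k _).trans ?_
    refine Finset.sum_congr rfl fun n hn ↦ ?_
    have hn₀ : (n : ℂ) ≠ 0 := Nat.cast_ne_zero.2 (Nat.one_le_iff_ne_zero.1 (Finset.mem_Icc.1 hn).1)
    rw [neg_add, Complex.cpow_add _ _ hn₀, Complex.cpow_def_of_ne_zero hn₀ (-(t * _)),
      Complex.ofReal_neg, Complex.natCast_log, mul_assoc]
    ring_nf
  · simp only [iteratedDeriv_partialZeta, Complex.re_sum, re_neg_log_pow_mul_cpow]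

theorem re_iteratedDeriv_two_mul_riemannZeta_pos (k : ℕ) {σ : ℝ} (hσ : 1 / 2 < σ) :
    0 < (iteratedDeriv (2 * k) riemannZeta (2 * σ : ℝ)).re := by
  have hsum := Complex.hasSum_re (hasSum_iteratedDeriv_riemannZeta (2 * k) (s := (2 * σ : ℝ))
    (by rw [Complex.ofReal_re]; linarith))
  simp only [re_neg_log_pow_mul_cpow] at hsum
  refine lt_of_lt_of_le ?_ (le_hasSum hsum 2 fun n _ ↦ by positivity)
  have hlog : Complex.log (2 : ℕ) ≠ 0 := by
    rw [← Complex.natCast_log, Complex.ofReal_ne_zero]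
    exact (Real.log_pos (by norm_num)).ne'
  have hcpow : ((2 : ℕ) : ℂ) ^ (-σ : ℂ) ≠ 0 := by simp [Complex.cpow_eq_zero_iff]
  exact pow_pos (norm_pos_iff.2 (mul_ne_zero (pow_ne_zero k (neg_ne_zero.2 hlog)) hcpow)) 2

theorem tendsto_meanSquare_iteratedDeriv_riemannZeta (k : ℕ) {σ : ℝ} (hσ : 1 / 2 < σ)
    (hσ₁ : σ < 1) :
    Tendsto (meanSquare fun t : ℝ ↦ iteratedDeriv k riemannZeta (σ + t * Complex.I)) atTop
      (nhds (iteratedDeriv (2 * k) riemannZeta (2 * σ : ℝ)).re) :=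
  tendsto_meanSquare_of_approx (continuous_iteratedDeriv_riemannZeta_line k hσ₁.ne)
    (fun N ↦ continuous_iteratedDeriv_partialZeta_line N k σ)
    (fun _ hε ↦ eventually_meanSquare_iteratedDeriv_riemannZeta_sub_le k hσ hσ₁ hε)
    (fun N ↦ tendsto_meanSquare_iteratedDeriv_partialZeta N k σ)
    ((Complex.continuous_re.tendsto _).comp
      (tendsto_iteratedDeriv_partialZeta (2 * k) (by rw [Complex.ofReal_re]; linarith)))

end SecondMoment

theorem second_moment_deriv_zeta_strip (ℓ : ℕ) (hℓ : 1 ≤ ℓ) (σ : ℝ)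
    (hσ : σ ∈ Set.Ioo (1 / 2 : ℝ) 1) :
    Filter.Tendsto
      (fun T : ℝ =>
        (∫ t in Set.Ioc (0 : ℝ) T,
            ‖iteratedDeriv ℓ riemannZeta ((σ : ℂ) + (t : ℂ) * Complex.I)‖ ^ 2) /
          ((iteratedDeriv (2 * ℓ) riemannZeta ((2 * σ : ℝ) : ℂ)).re * T))
      Filter.atTop (nhds 1) := by
  have hpos := re_iteratedDeriv_two_mul_riemannZeta_pos ℓ hσ.1
  have hmean := (tendsto_meanSquare_iteratedDeriv_riemannZeta ℓ hσ.1 hσ.2).div_const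
    (iteratedDeriv (2 * ℓ) riemannZeta (2 * σ : ℝ)).re
  rw [div_self hpos.ne'] at hmean
  simpa only [meanSquare, div_div, mul_comm] using hmean
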